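/- arXiv:0706.1091 — 2 statements merged into one kernel-verified Lean document; each statement's English description precedes it below -/
import Mathlib

section
/- Let d ≥ 2 be a natural number. Then 2/π is the greatest element of the set { ∬_{𝕋×𝕋} f(x,y) ⟨g(x), h(y)⟩ dx dy : g, h : 𝕋 → ℝ^d measurable with ‖g(x)‖ = 1 and ‖h(y)‖ = 1 for almost every x, y }, where ⟨·,·⟩ and ‖·‖ are the Euclidean inner product and norm on ℝ^d. -/
open MeasureTheory
open scoped RealInnerProductSpace

/-!
Convolution with a kernel `k` on the circle is a Fourier multiplier, hence acts on `L²(𝕋; E)` with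
norm at most `sup |k̂|`: in a Hilbert basis of `E` it acts coordinate by coordinate, and there
Parseval applies. By Cauchy-Schwarz, `∬ k(x - y) ⟪g x, h y⟫ = ⟪g, k ⋆ h⟫ ≤ sup |k̂|` for unit vector
fields `g` and `h`. Winding `n` times around the unit circle of a plane in `E`,
`g x = h x = e^{2πinx}`, gives the value `Re k̂(n)`, so the bound is sharp when
`Re k̂(n) = sup |k̂|`. The square wave has `k̂(n) = sinc(πn/2)` for `n ≠ 0` and `k̂(0) = 0`, so
`sup |k̂| = k̂(1) = sinc(π/2) = 2/π`.
-/

section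

open AddCircle ContinuousLinearMap
open scoped ENNReal Real Convolution

section Orthonormal

variable {𝕜 E ι : Type*} [RCLike 𝕜] [NormedAddCommGroup E] [InnerProductSpace 𝕜 E]

lemma dist_eq_sqrt_two_of_orthonormal {v : ι → E} (hv : Orthonormal 𝕜 v) {i j : ι} (hij : i ≠ j) :
    dist (v i) (v j) = √2 := by
  have h : ‖v i - v j‖ * ‖v i - v j‖ = 2 := by
    rw [norm_sub_mul_self (𝕜 := 𝕜), hv.1, hv.1, hv.2 hij, map_zero]
    norm_num
  rw [dist_eq_norm, ← Real.sqrt_mul_self (norm_nonneg (v i - v j)), h]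

lemma countable_of_orthonormal [TopologicalSpace.SeparableSpace E] {v : ι → E}
    (hv : Orthonormal 𝕜 v) : Countable ι := by
  refine Pairwise.countable_of_isOpen_disjoint (s := fun i ↦ Metric.ball (v i) (1 / 2))
    (fun i j hij ↦ Metric.ball_disjoint_ball ?_) (fun _ ↦ Metric.isOpen_ball)
    fun i ↦ Metric.nonempty_ball.2 (by norm_num)
  rw [dist_eq_sqrt_two_of_orthonormal hv hij, Real.le_sqrt] <;> norm_num

lemma exists_orthonormal_of_le_rank {n : ℕ} (hn : n ≤ Module.rank 𝕜 E) :
    ∃ e : Fin n → E, Orthonormal 𝕜 e :=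
  let ⟨_, hv⟩ := Module.le_rank_iff.1 hn
  ⟨_, InnerProductSpace.gramSchmidtNormed_orthonormal hv⟩

lemma nonempty_complex_linearIsometry {E : Type*} [NormedAddCommGroup E] [InnerProductSpace ℝ E]
    (hE : 2 ≤ Module.rank ℝ E) : Nonempty (ℂ →ₗᵢ[ℝ] E) := by
  obtain ⟨e, he⟩ := exists_orthonormal_of_le_rank (n := 2) (mod_cast hE)
  let b := Complex.orthonormalBasisOneI
  have hb : Orthonormal ℝ b.toBasis := by simp [b.orthonormal]
  refine ⟨(b.toBasis.constr ℝ e).isometryOfOrthonormal hb ?_⟩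
  convert he
  ext i
  simp

lemma tsum_enorm_hilbertBasis_repr_sq (b : HilbertBasis ι 𝕜 E) (x : E) :
    ∑' i, ‖b.repr x i‖ₑ ^ 2 = ‖x‖ₑ ^ 2 := by
  have h : HasSum (fun i ↦ ‖b.repr x i‖ ^ 2) (‖x‖ ^ 2) := by
    simpa using lp.hasSum_norm (by simp) (b.repr x)
  simp_rw [← ofReal_norm, ← ENNReal.ofReal_pow (norm_nonneg _)]
  rw [← h.tsum_eq, ENNReal.ofReal_tsum_of_nonneg (fun _ ↦ by positivity) h.summable]

lemma eLpNorm_two_sq_eq_lintegral {α : Type*} [MeasurableSpace α] {μ : Measure α} (f : α → E) :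
    eLpNorm f 2 μ ^ 2 = ∫⁻ x, ‖f x‖ₑ ^ 2 ∂μ := by
  simpa using! eLpNorm_nnreal_pow_eq_lintegral (f := f) (μ := μ) (p := 2) two_ne_zero

lemma eLpNorm_two_sq_eq_tsum {α : Type*} [MeasurableSpace α] {μ : Measure α} [Countable ι]
    (b : HilbertBasis ι 𝕜 E) {f : α → E} (hf : AEStronglyMeasurable f μ) :
    eLpNorm f 2 μ ^ 2 = ∑' i, eLpNorm (fun x ↦ inner 𝕜 (b i) (f x)) 2 μ ^ 2 := by
  simp only [eLpNorm_two_sq_eq_lintegral, ← tsum_enorm_hilbertBasis_repr_sq b, b.repr_apply_apply]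
  exact lintegral_tsum fun i ↦ (hf.const_inner (𝕜 := 𝕜) (c := b i)).enorm.pow_const 2

lemma eLpNorm_eq_one_of_ae_norm_eq_one {α F : Type*} [MeasurableSpace α] {μ : Measure α}
    [IsProbabilityMeasure μ] [NormedAddCommGroup F] {p : ℝ≥0∞} (hp : p ≠ 0) {f : α → F}
    (hf : ∀ᵐ x ∂μ, ‖f x‖ = 1) : eLpNorm f p μ = 1 := by
  rw [eLpNorm_congr_norm_ae (g := fun _ ↦ (1 : ℝ)) (hf.mono fun x hx ↦ by rw [hx, norm_one]),
    eLpNorm_const _ hp (NeZero.ne μ)]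
  simp

lemma enorm_integral_inner_le {α : Type*} [MeasurableSpace α] {μ : Measure α} {f g : α → E}
    (hf : AEStronglyMeasurable f μ) (hg : AEStronglyMeasurable g μ) :
    ‖∫ x, inner 𝕜 (f x) (g x) ∂μ‖ₑ ≤ eLpNorm f 2 μ * eLpNorm g 2 μ := by
  refine (enorm_integral_le_lintegral_enorm _).trans ?_
  rw [← eLpNorm_one_eq_lintegral_enorm]
  simpa using eLpNorm_le_eLpNorm_mul_eLpNorm'_of_norm hf hg (inner 𝕜) 1
    (.of_forall fun x ↦ by simpa using norm_inner_le_norm (𝕜 := 𝕜) (f x) (g x))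

end Orthonormal

section Convolution

variable {𝕜 G E F : Type*} [RCLike 𝕜] [AddCommGroup G] [MeasurableSpace G] [MeasurableAdd₂ G]
  [MeasurableNeg G] {μ : Measure G} [μ.IsAddLeftInvariant] [μ.IsNegInvariant]
  [NormedAddCommGroup E] [NormedSpace 𝕜 E] {p q : ℝ≥0∞} [p.HolderConjugate q]
  {k : G → 𝕜} {f : G → E}

lemma convolutionExists_of_memLp (hk : MemLp k p μ) (hf : MemLp f q μ) :
    ConvolutionExists k f (lsmul 𝕜 𝕜) μ := fun x ↦
  memLp_one_iff_integrable.1 <|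
    (hf.comp_measurePreserving (μ.measurePreserving_sub_left x)).smul hk

variable [NormedSpace ℝ E]

lemma enorm_convolution_le (hk : MemLp k p μ) (hf : MemLp f q μ) (x : G) :
    ‖(k ⋆[lsmul 𝕜 𝕜, μ] f) x‖ₑ ≤ eLpNorm k p μ * eLpNorm f q μ := by
  have hx := μ.measurePreserving_sub_left x
  calc ‖(k ⋆[lsmul 𝕜 𝕜, μ] f) x‖ₑ
      ≤ ∫⁻ t, ‖(k • (f ∘ (x - ·))) t‖ₑ ∂μ := enorm_integral_le_lintegral_enorm _
    _ ≤ eLpNorm k p μ * eLpNorm (f ∘ (x - ·)) q μ := by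
      rw [← eLpNorm_one_eq_lintegral_enorm]
      exact eLpNorm_smul_le_mul_eLpNorm (hf.1.comp_measurePreserving hx) hk.1
    _ = _ := by rw [eLpNorm_comp_measurePreserving hf.1 hx]

lemma memLp_top_convolution [SFinite μ] (hk : MemLp k p μ) (hf : MemLp f q μ) :
    MemLp (k ⋆[lsmul 𝕜 𝕜, μ] f) ∞ μ := by
  refine ⟨(hk.1.convolution_integrand (lsmul 𝕜 𝕜) hf.1).integral_prod_right', ?_⟩
  refine (eLpNormEssSup_le_of_ae_enorm_bound (.of_forall (enorm_convolution_le hk hf))).trans_lt ?_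
  exact ENNReal.mul_lt_top hk.2 hf.2

lemma inner_convolution {E : Type*} [NormedAddCommGroup E] [InnerProductSpace ℝ E]
    [CompleteSpace E] {k : G → ℝ} {f : G → E} (hk : MemLp k p μ) (hf : MemLp f q μ) (v : E)
    (x : G) :
    ⟪v, (k ⋆[lsmul ℝ ℝ, μ] f) x⟫ = (k ⋆[lsmul ℝ ℝ, μ] fun y ↦ ⟪v, f y⟫) x := by
  rw [convolution_def, ← integral_inner (convolutionExists_of_memLp hk hf x)]
  simp [convolution_lsmul, inner_smul_right]

end Convolution

section Fourier

lemma fourier_apply_add {T : ℝ} (n : ℤ) (x y : AddCircle T) :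
    (fourier n (x + y) : ℂ) = fourier n x * fourier n y := by
  simp only [fourier_apply, smul_add, toCircle_add, Circle.coe_mul]

variable {T : ℝ} [hT : Fact (0 < T)]

lemma fourierCoeff_convolution {E : Type*} [NormedAddCommGroup E] [NormedSpace ℂ E]
    [CompleteSpace E] {k : AddCircle T → ℂ} {f : AddCircle T → E} (hk : Integrable k haarAddCircle)
    (hf : Integrable f haarAddCircle) (n : ℤ) :
    fourierCoeff (k ⋆[lsmul ℂ ℂ, haarAddCircle] f) n = fourierCoeff k n • fourierCoeff f n := by
  -- Twisting both factors by a character twists their convolution by it.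
  have h : (fun t ↦ fourier (-n) t • k t) ⋆[lsmul ℂ ℂ, haarAddCircle]
      (fun t ↦ fourier (-n) t • f t) =
      fun x ↦ fourier (-n) x • (k ⋆[lsmul ℂ ℂ, haarAddCircle] f) x := by
    ext x
    simp only [convolution_lsmul, ← integral_smul]
    congr with t
    have hx : (fourier (-n) x : ℂ) = fourier (-n) t * fourier (-n) (x - t) := by
      rw [← fourier_apply_add, add_sub_cancel]
    simp only [hx, smul_eq_mul, smul_smul]
    congr 1
    ring
  rw [fourierCoeff, ← h]
  exact integral_convolution (lsmul ℂ ℂ) (hk.fourier_smul _) (hf.fourier_smul _)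

lemma tsum_enorm_fourierCoeff_sq {f : AddCircle T → ℂ} (hf : MemLp f 2 haarAddCircle) :
    ∑' n, ‖fourierCoeff f n‖ₑ ^ 2 = eLpNorm f 2 haarAddCircle ^ 2 := by
  rw [← Lp.enorm_toLp hf, ← tsum_enorm_hilbertBasis_repr_sq fourierBasis]
  simp only [fourierBasis_repr, fourierCoeff_congr_ae hf.coeFn_toLp]

variable {C : ℝ≥0∞}

lemma eLpNorm_complex_convolution_le_of_enorm_fourierCoeff_le {k f : AddCircle T → ℂ}
    (hk : MemLp k 2 haarAddCircle) (hC : ∀ n, ‖fourierCoeff k n‖ₑ ≤ C)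
    (hf : MemLp f 2 haarAddCircle) :
    eLpNorm (k ⋆[lsmul ℂ ℂ, haarAddCircle] f) 2 haarAddCircle ≤ C * eLpNorm f 2 haarAddCircle := by
  have hkf : MemLp (k ⋆[lsmul ℂ ℂ, haarAddCircle] f) 2 haarAddCircle :=
    (memLp_top_convolution hk hf).mono_exponent le_top
  rw [← ENNReal.pow_le_pow_left_iff two_ne_zero, mul_pow, ← tsum_enorm_fourierCoeff_sq hf,
    ← tsum_enorm_fourierCoeff_sq hkf, ← ENNReal.tsum_mul_left]
  refine ENNReal.tsum_le_tsum fun n ↦ ?_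
  rw [fourierCoeff_convolution (hk.integrable one_le_two) (hf.integrable one_le_two), smul_eq_mul,
    enorm_mul, mul_pow]
  gcongr
  exact hC n

lemma eLpNorm_real_convolution_le_of_enorm_fourierCoeff_le {k f : AddCircle T → ℝ}
    (hk : MemLp k 2 haarAddCircle) (hC : ∀ n, ‖fourierCoeff (fun t ↦ (k t : ℂ)) n‖ₑ ≤ C)
    (hf : MemLp f 2 haarAddCircle) :
    eLpNorm (k ⋆[lsmul ℝ ℝ, haarAddCircle] f) 2 haarAddCircle ≤ C * eLpNorm f 2 haarAddCircle := by
  have h : (fun t ↦ (k t : ℂ)) ⋆[lsmul ℂ ℂ, haarAddCircle] (fun t ↦ (f t : ℂ)) =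
      fun x ↦ ((k ⋆[lsmul ℝ ℝ, haarAddCircle] f) x : ℂ) := by
    ext x
    simp [convolution_lsmul, ← integral_complex_ofReal]
  have hnorm (φ : AddCircle T → ℝ) :
      eLpNorm (fun t ↦ (φ t : ℂ)) 2 haarAddCircle = eLpNorm φ 2 haarAddCircle :=
    eLpNorm_congr_norm_ae (.of_forall fun t ↦ by simp)
  rw [← hnorm, ← hnorm f, ← h]
  exact eLpNorm_complex_convolution_le_of_enorm_fourierCoeff_le hk.ofReal hC hf.ofReal

section Hilbert

variable {E : Type*} [NormedAddCommGroup E] [InnerProductSpace ℝ E] {k : AddCircle T → ℝ}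

lemma integral_mul_inner_fourier (L : ℂ →ₗᵢ[ℝ] E) (hk : Integrable k haarAddCircle) (n : ℤ) :
    ∫ x, ∫ y, k (x - y) * ⟪L (fourier n x), L (fourier n y)⟫ ∂haarAddCircle ∂haarAddCircle =
      (fourierCoeff (fun t ↦ (k t : ℂ)) n).re := by
  have hinner (x y : AddCircle T) : k (x - y) * ⟪L (fourier n x), L (fourier n y)⟫ =
      (fourier (-n) (x - y) • (k (x - y) : ℂ)).re := by
    have hfourier : fourier n y * starRingEnd ℂ (fourier n x) = fourier (-n) (x - y) := by
      rw [sub_eq_add_neg, fourier_apply_add, fourier_neg, mul_comm]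
      simp only [fourier_apply, neg_smul_neg]
    rw [L.inner_map_map, Complex.inner, hfourier, smul_eq_mul, Complex.re_mul_ofReal, mul_comm]
  simp only [hinner, integral_sub_left_eq_self (fun t ↦ (fourier (-n) t • (k t : ℂ)).re)]
  simp only [integral_const, probReal_univ, one_smul]
  exact integral_re (hk.ofReal (𝕜 := ℂ).fourier_smul (-n))

variable [CompleteSpace E]

lemma eLpNorm_convolution_le_of_enorm_fourierCoeff_le [TopologicalSpace.SeparableSpace E]
    {f : AddCircle T → E}
    (hk : MemLp k 2 haarAddCircle) (hC : ∀ n, ‖fourierCoeff (fun t ↦ (k t : ℂ)) n‖ₑ ≤ C)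
    (hf : MemLp f 2 haarAddCircle) :
    eLpNorm (k ⋆[lsmul ℝ ℝ, haarAddCircle] f) 2 haarAddCircle ≤ C * eLpNorm f 2 haarAddCircle := by
  obtain ⟨w, b, -⟩ := exists_hilbertBasis ℝ E
  have : Countable w := countable_of_orthonormal b.orthonormal
  rw [← ENNReal.pow_le_pow_left_iff two_ne_zero, mul_pow, eLpNorm_two_sq_eq_tsum b hf.1,
    eLpNorm_two_sq_eq_tsum b (memLp_top_convolution hk hf).1, ← ENNReal.tsum_mul_left]
  refine ENNReal.tsum_le_tsum fun i ↦ ?_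
  simp only [inner_convolution hk hf, ← mul_pow]
  gcongr
  exact eLpNorm_real_convolution_le_of_enorm_fourierCoeff_le hk hC (hf.const_inner _)

lemma enorm_integral_mul_inner_le [TopologicalSpace.SeparableSpace E] {g h : AddCircle T → E}
    (hk : MemLp k 2 haarAddCircle) (hC : ∀ n, ‖fourierCoeff (fun t ↦ (k t : ℂ)) n‖ₑ ≤ C)
    (hg : AEStronglyMeasurable g haarAddCircle) (hh : MemLp h 2 haarAddCircle) :
    ‖∫ x, ∫ y, k (x - y) * ⟪g x, h y⟫ ∂haarAddCircle ∂haarAddCircle‖ₑ ≤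
      eLpNorm g 2 haarAddCircle * (C * eLpNorm h 2 haarAddCircle) := by
  have hinner (x : AddCircle T) : ∫ y, k (x - y) * ⟪g x, h y⟫ ∂haarAddCircle =
      ⟪g x, (k ⋆[lsmul ℝ ℝ, haarAddCircle] h) x⟫ := by
    rw [inner_convolution hk hh, convolution_lsmul_swap]
    rfl
  simp only [hinner]
  refine (enorm_integral_inner_le hg (memLp_top_convolution hk hh).1).trans ?_
  gcongr
  exact eLpNorm_convolution_le_of_enorm_fourierCoeff_le hk hC hh

theorem isGreatest_integral_mul_inner [SecondCountableTopology E] [MeasurableSpace E]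
    [BorelSpace E] (hE : 2 ≤ Module.rank ℝ E) (hk : MemLp k 2 haarAddCircle) {n : ℤ}
    (hn : ∀ m, ‖fourierCoeff (fun t ↦ (k t : ℂ)) m‖ ≤
      (fourierCoeff (fun t ↦ (k t : ℂ)) n).re) :
    IsGreatest
      {I : ℝ | ∃ g h : AddCircle T → E, Measurable g ∧ Measurable h ∧
        (∀ᵐ x ∂haarAddCircle, ‖g x‖ = 1) ∧ (∀ᵐ y ∂haarAddCircle, ‖h y‖ = 1) ∧
        I = ∫ x, ∫ y, k (x - y) * ⟪g x, h y⟫ ∂haarAddCircle ∂haarAddCircle}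
      (fourierCoeff (fun t ↦ (k t : ℂ)) n).re := by
  constructor
  · obtain ⟨L⟩ := nonempty_complex_linearIsometry hE
    have hmeas : Measurable fun x : AddCircle T ↦ L (fourier n x) := by fun_prop
    have hnorm : ∀ᵐ x : AddCircle T ∂haarAddCircle, ‖L (fourier n x)‖ = 1 :=
      .of_forall fun x ↦ by rw [L.norm_map, fourier_apply, Circle.norm_coe]
    exact ⟨_, _, hmeas, hmeas, hnorm, hnorm,
      (integral_mul_inner_fourier L (hk.integrable one_le_two) n).symm⟩
  · rintro _ ⟨g, h, hg, hh, hg1, hh1, rfl⟩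
    have hC (m : ℤ) : ‖fourierCoeff (fun t ↦ (k t : ℂ)) m‖ₑ ≤
        ‖(fourierCoeff (fun t ↦ (k t : ℂ)) n).re‖ₑ :=
      enorm_le_iff_norm_le.2 ((hn m).trans (le_abs_self _))
    have hbound := enorm_integral_mul_inner_le hk hC hg.aestronglyMeasurable
      (.of_bound hh.aestronglyMeasurable 1 (hh1.mono fun _ hx ↦ hx.le))
    rw [eLpNorm_eq_one_of_ae_norm_eq_one two_ne_zero hg1,
      eLpNorm_eq_one_of_ae_norm_eq_one two_ne_zero hh1, mul_one, one_mul, enorm_le_iff_norm_le,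
      Real.norm_of_nonneg ((norm_nonneg _).trans (hn n))] at hbound
    exact (le_abs_self _).trans hbound

end Hilbert

lemma integral_cexp_ofReal_mul_I_eq_sinc (c r : ℝ) :
    ∫ x in -r..r, Complex.exp ((c * x : ℝ) * Complex.I) = 2 * r * Real.sinc (c * r) := by
  obtain rfl | hc := eq_or_ne c 0
  · simp [two_mul]
  · rw [intervalIntegral.integral_comp_mul_left (fun x : ℝ ↦ Complex.exp (x * Complex.I)) hc,
      mul_neg, integral_exp_mul_I_eq_sinc]
    have : (c : ℂ) ≠ 0 := mod_cast hc
    push_cast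
    simp only [Complex.real_smul]
    push_cast
    field_simp

lemma fourierCoeff_indicator_ball {r : ℝ} (hr₀ : 0 ≤ r) (hr : r ≤ T / 2) (n : ℤ) :
    fourierCoeff ((Metric.ball (0 : AddCircle T) r).indicator 1) n =
      ((2 * r / T * Real.sinc (2 * π * n * r / T) : ℝ) : ℂ) := by
  have hT₀ : 0 < T := hT.out
  have hball : ∀ x ∈ Set.Ioc (-(T / 2)) (-(T / 2) + T),
      fourier (-n) (x : AddCircle T) • (Metric.ball 0 r).indicator (1 : AddCircle T → ℂ) x =
      (Set.Ioo (-r) r).indicator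
        (fun x ↦ Complex.exp ((-(2 * π * n / T) * x : ℝ) * Complex.I)) x := by
    intro x hx
    have hnorm : ‖(x : AddCircle T)‖ = |x| := by
      rw [norm_coe_eq_abs_iff _ hT₀.ne', abs_of_pos hT₀, abs_le]
      constructor <;> linarith [hx.1, hx.2]
    have hexp : (fourier (-n) (x : AddCircle T) : ℂ) =
        Complex.exp ((-(2 * π * n / T) * x : ℝ) * Complex.I) := by
      rw [fourier_coe_apply]
      push_cast
      congr 1
      ring
    classical
    simp only [Set.indicator_apply, mem_ball_zero_iff, hnorm, hexp, Set.mem_Ioo, abs_lt,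
      Pi.one_apply, smul_eq_mul, mul_ite, mul_one, mul_zero]
  have hIoo : Set.Ioc (-(T / 2)) (-(T / 2) + T) ∩ Set.Ioo (-r) r = Set.Ioo (-r) r :=
    Set.inter_eq_right.2 fun x hx ↦ ⟨by linarith [hx.1], by linarith [hx.2]⟩
  rw [fourierCoeff_eq_intervalIntegral _ _ (-(T / 2)),
    intervalIntegral.integral_of_le (by linarith), setIntegral_congr_fun measurableSet_Ioc hball,
    setIntegral_indicator measurableSet_Ioo, hIoo, ← integral_Ioc_eq_integral_Ioo,
    ← intervalIntegral.integral_of_le (by linarith), integral_cexp_ofReal_mul_I_eq_sinc,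
    neg_mul, Real.sinc_neg]
  rw [Complex.real_smul]
  push_cast
  ring_nf

/-- The even square wave on `ℝ/Tℤ`, equal to `1` within `T / 4` of the origin and to `-1` elsewhere.
For `T = 1`, the sign `f(x, y)` of the theorem is `squareWave 1 (x - y)`. -/
noncomputable def squareWave (T : ℝ) (t : AddCircle T) : ℝ := if ‖t‖ < T / 4 then 1 else -1

lemma squareWave_eq_indicator {T : ℝ} (t : AddCircle T) :
    (squareWave T t : ℂ) = 2 * (Metric.ball 0 (T / 4)).indicator 1 t - 1 := by
  classical
  simp only [squareWave, Set.indicator_apply, mem_ball_zero_iff]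
  split_ifs <;> norm_num

lemma measurable_squareWave (T : ℝ) : Measurable (squareWave T) :=
  .ite (measurableSet_lt measurable_norm measurable_const) measurable_const measurable_const

lemma abs_squareWave {T : ℝ} (t : AddCircle T) : |squareWave T t| = 1 := by
  unfold squareWave
  split_ifs <;> simp

lemma memLp_squareWave (p : ℝ≥0∞) : MemLp (squareWave T) p haarAddCircle :=
  .of_bound (measurable_squareWave T).aestronglyMeasurable 1
    (.of_forall fun t ↦ (abs_squareWave t).le)

lemma fourierCoeff_squareWave (n : ℤ) :
    fourierCoeff (fun t ↦ (squareWave T t : ℂ)) n =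
      ((Real.sinc (π * n / 2) - if n = 0 then 1 else 0 : ℝ) : ℂ) := by
  have hT₀ : 0 < T := hT.out
  have hdecomp : (fun t ↦ (squareWave T t : ℂ)) =
      (2 : ℂ) • (Metric.ball 0 (T / 4)).indicator 1 + (-1 : ℂ) • ⇑(fourier 0) := by
    ext t
    simp [squareWave_eq_indicator, sub_eq_add_neg]
  have hint : Integrable ((Metric.ball (0 : AddCircle T) (T / 4)).indicator (1 : AddCircle T → ℂ))
      haarAddCircle := (integrable_const 1).indicator measurableSet_ball
  have hint₀ : Integrable (fourier (T := T) 0) haarAddCircle :=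
    (fourier 0).continuous.integrable_of_hasCompactSupport (.of_compactSpace _)
  rw [hdecomp, fourierCoeff.add (hint.smul _) (hint₀.smul _), Pi.add_apply,
    fourierCoeff.const_smul, fourierCoeff.const_smul, fourierCoeff_fourier,
    fourierCoeff_indicator_ball (by positivity) (by linarith)]
  have hamplitude : 2 * (T / 4) / T = 1 / 2 := by field_simp; norm_num
  have hphase : 2 * π * n * (T / 4) / T = π * n / 2 := by ring_nf; field_simp
  rw [hamplitude, hphase]
  by_cases hn : n = 0 <;> simp [hn, sub_eq_add_neg]

lemma sinc_pi_div_two : Real.sinc (π / 2) = 2 / π := by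
  rw [Real.sinc_of_ne_zero (by positivity), Real.sin_pi_div_two, one_div_div]

lemma abs_sinc_le_inv_abs {x : ℝ} (hx : x ≠ 0) : |Real.sinc x| ≤ |x|⁻¹ := by
  rw [Real.sinc_of_ne_zero hx, abs_div, ← one_div]
  gcongr
  exact Real.abs_sin_le_one x

lemma norm_fourierCoeff_squareWave_le (n : ℤ) :
    ‖fourierCoeff (fun t ↦ (squareWave T t : ℂ)) n‖ ≤ 2 / π := by
  rw [fourierCoeff_squareWave, Complex.norm_real, Real.norm_eq_abs]
  obtain rfl | hn := eq_or_ne n 0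
  · simpa using (div_pos two_pos Real.pi_pos).le
  have hpi : π / 2 ≤ |π * n / 2| := by
    have hn1 : (1 : ℝ) ≤ |(n : ℝ)| := mod_cast Int.one_le_abs hn
    rw [abs_div, abs_mul, abs_of_pos Real.pi_pos, abs_two]
    gcongr
    exact le_mul_of_one_le_right Real.pi_pos.le hn1
  rw [if_neg hn, sub_zero]
  calc |Real.sinc (π * n / 2)|
      ≤ |π * n / 2|⁻¹ := abs_sinc_le_inv_abs (by simp [hn, Real.pi_ne_zero])
    _ ≤ (π / 2)⁻¹ := by gcongr
    _ = 2 / π := inv_div _ _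

end Fourier

end

theorem bell_example2_dim_ge_two_general {E : Type*} [NormedAddCommGroup E]
    [InnerProductSpace ℝ E] [CompleteSpace E] [SecondCountableTopology E] [MeasurableSpace E]
    [BorelSpace E] (hE : 2 ≤ Module.rank ℝ E) :
    IsGreatest
      {I : ℝ | ∃ g h : UnitAddCircle → E,
        Measurable g ∧ Measurable h ∧
        (∀ᵐ x : UnitAddCircle, ‖g x‖ = 1) ∧
        (∀ᵐ y : UnitAddCircle, ‖h y‖ = 1) ∧
        I = ∫ x : UnitAddCircle, ∫ y : UnitAddCircle,
              (if dist x y < 1/4 then (1:ℝ) else -1) * ⟪g x, h y⟫}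
      (2 / Real.pi) := by
  have hvol : (volume : Measure UnitAddCircle) = AddCircle.haarAddCircle := by
    simp [AddCircle.volume_eq_smul_haarAddCircle]
  have hcoeff : (fourierCoeff (fun t ↦ (squareWave 1 t : ℂ)) 1).re = 2 / Real.pi := by
    simp [fourierCoeff_squareWave, sinc_pi_div_two]
  have hmax (n : ℤ) : ‖fourierCoeff (fun t ↦ (squareWave 1 t : ℂ)) n‖ ≤
      (fourierCoeff (fun t ↦ (squareWave 1 t : ℂ)) 1).re :=
    hcoeff ▸ norm_fourierCoeff_squareWave_le n
  rw [hvol, ← hcoeff]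
  simpa only [squareWave, dist_eq_norm] using
    isGreatest_integral_mul_inner hE (memLp_squareWave 2) hmax

/-- Let `𝕋 = ℝ/ℤ` with its Haar probability measure, `f(x,y) = 1` if `dist x y < 1/4`
and `-1` otherwise, and let `d ≥ 2`. Then `2/π` is the greatest element of the set of
values `∬ f(x,y) ⟨g(x), h(y)⟩` over measurable `g, h : 𝕋 → ℝ^d` with unit norm a.e. -/
theorem bell_example2_dim_ge_two (d : ℕ) (hd : 2 ≤ d) :
    IsGreatest
      {I : ℝ | ∃ g h : UnitAddCircle → EuclideanSpace ℝ (Fin d),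
        Measurable g ∧ Measurable h ∧
        (∀ᵐ x : UnitAddCircle, ‖g x‖ = 1) ∧
        (∀ᵐ y : UnitAddCircle, ‖h y‖ = 1) ∧
        I = ∫ x : UnitAddCircle, ∫ y : UnitAddCircle,
              (if dist x y < 1/4 then (1:ℝ) else -1) * ⟪g x, h y⟫}
      (2 / Real.pi) :=
  bell_example2_dim_ge_two_general (by simpa [← Module.finrank_eq_rank] using hd)
end

section
/- Let H be a real inner product space and let h : 𝕋 → H be a measurable function with ‖h(y)‖ = 1 for almost every y. Define G : 𝕋 → H by G(x) = ∫_𝕋 f(x,y) h(y) dy. Then: (i) G is Lipschitz with Lipschitz constant 4; (ii) for almost every x ∈ 𝕋, G is differentiable at x with G'(x) = 2 h(x + 1/4) − 2 h(x − 1/4); (iii) G(x + 1/2) = −G(x) for all x ∈ 𝕋. -/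
open MeasureTheory

/-!
Since `f(x, y)` is `1` on the open arc of radius `1/4` around `x` and `-1` off it, `G x` is twice
the integral of `h` over that arc minus the constant `∫ h`. Lifted to `ℝ`, the arc integral is
`∫ t in (x - 1/4)..(x + 1/4), h t`: a `2`-Lipschitz function of `x`, differentiable almost
everywhere by Lebesgue's theorem. The arcs around `x` and `x + 1/2` fill the circle up to null
sets, hence the antiperiodicity.

The space `H` need not be separable, so Bochner integrability of the Borel map `h` needs an
argument. If the range of a Borel map on a standard Borel space were not separable, it would
contain an uncountable `ε`-separated set `D`. All subsets of `D` are closed, so all of their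
preimages are Borel. Through a section of the map, `D` is then identified with an uncountable
standard Borel space all of whose subsets are Borel, but there are `2 ^ 𝔠` subsets of such a
space and only `𝔠` Borel ones.
-/

open Set Metric
open scoped NNReal ENNReal Cardinal

theorem mk_measurableSet_le_continuum (X : Type*) [MeasurableSpace X]
    [MeasurableSpace.CountablyGenerated X] : #{s : Set X | MeasurableSet s} ≤ 𝔠 := by
  obtain ⟨b, hb, hgen⟩ := MeasurableSpace.CountablyGenerated.isCountablyGenerated (α := X)
  rw [hgen]
  exact MeasurableSpace.cardinal_measurableSet_le_continuum
    (hb.le_aleph0.trans Cardinal.aleph0_le_continuum)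

theorem countable_of_forall_measurableSet {X : Type*} [MeasurableSpace X] [StandardBorelSpace X]
    (hX : ∀ s : Set X, MeasurableSet s) : Countable X := by
  by_contra hunc
  let e : X ≃ᵐ ℝ := PolishSpace.measurableEquivOfNotCountable hunc not_countable
  have hall : {s : Set ℝ | MeasurableSet s} = univ :=
    eq_univ_of_forall fun s => e.measurableSet_preimage.1 (hX _)
  have hle : #(Set ℝ) ≤ 𝔠 := by
    simpa only [hall, Cardinal.mk_univ] using mk_measurableSet_le_continuum ℝ
  rw [Cardinal.mk_set, Cardinal.mk_real] at hle
  exact hle.not_gt (Cardinal.cantor 𝔠)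

theorem countable_of_surjective_of_forall_measurableSet_preimage {X Y : Type*}
    [MeasurableSpace X] [StandardBorelSpace X] {f : X → Y} (hf : Function.Surjective f)
    (hmeas : ∀ s : Set Y, MeasurableSet (f ⁻¹' s)) : Countable Y := by
  let σ := Function.surjInv hf
  have hfσ : ∀ y, f (σ y) = y := Function.surjInv_eq hf
  -- The image of the section `σ` is Borel because it is the fixed-point set of `σ ∘ f`.
  let R : Set X := {x | σ (f x) = x}
  have hR : MeasurableSet R := measurableSet_eq_fun (fun s _ => hmeas (σ ⁻¹' s)) measurable_id
  have := hR.standardBorel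
  have : Countable R := countable_of_forall_measurableSet fun s => by
    have hs : s = Subtype.val ⁻¹' (f ⁻¹' (σ ⁻¹' (Subtype.val '' s))) := by
      ext x
      have hx : σ (f x) = x := x.2
      simp only [mem_preimage, hx, Subtype.val_injective.mem_set_image]
    rw [hs]
    exact measurable_subtype_coe (hmeas _)
  exact Function.Surjective.countable (f := fun x : R => f x) fun y =>
    ⟨⟨σ y, congrArg σ (hfσ y)⟩, hfσ y⟩

theorem countable_of_subset_range_of_forall_measurableSet {X Y : Type*} [MeasurableSpace X]
    [StandardBorelSpace X] [MeasurableSpace Y] {f : X → Y} (hf : Measurable f) {D : Set Y}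
    (hD : D ⊆ range f) (hmeas : ∀ s ⊆ D, MeasurableSet s) : D.Countable := by
  have := (hf (hmeas D subset_rfl)).standardBorel
  refine countable_of_surjective_of_forall_measurableSet_preimage
    (f := D.restrictPreimage f) ?_ fun s => ?_
  · rintro ⟨y, hy⟩
    obtain ⟨x, rfl⟩ := hD hy
    exact ⟨⟨x, hy⟩, rfl⟩
  · rw [← preimage_image_eq s Subtype.val_injective]
    exact measurable_subtype_coe (hf (hmeas _ (Subtype.coe_image_subset D s)))

theorem exists_maximal_isSeparated {X : Type*} [PseudoEMetricSpace X] (ε : ℝ≥0∞) (s : Set X) :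
    ∃ N, Maximal (fun N => N ⊆ s ∧ IsSeparated ε N) N :=
  zorn_subset {N | N ⊆ s ∧ IsSeparated ε N} fun c hc hchain =>
    ⟨⋃₀ c, ⟨sUnion_subset fun _ hN => (hc hN).1,
      (pairwise_sUnion hchain.directedOn).2 fun _ hN => (hc hN).2⟩,
      fun _ => subset_sUnion_of_mem⟩

theorem isSeparable_of_forall_isSeparated_countable {X : Type*} [PseudoEMetricSpace X]
    {s : Set X} (hs : ∀ ε : ℝ≥0, 0 < ε → ∀ N ⊆ s, IsSeparated ε N → N.Countable) :
    TopologicalSpace.IsSeparable s := by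
  obtain ⟨t, -, ht, hst⟩ := EMetric.subset_countable_closure_of_almost_dense_set s fun ε hε => by
    obtain ⟨δ, hδ, hδε⟩ := ENNReal.lt_iff_exists_nnreal_btwn.1 hε
    obtain ⟨N, hN⟩ := exists_maximal_isSeparated δ s
    have hcover : IsCover δ s N := .of_maximal_isSeparated hN
    exact ⟨N, hs δ (by exact_mod_cast hδ) N hN.prop.1 hN.prop.2,
      (isCover_iff_subset_iUnion_closedEBall.1 hcover).trans
        (iUnion₂_mono fun _ _ => closedEBall_subset_closedEBall hδε.le)⟩
  exact ⟨t, ht, hst⟩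

theorem isClosed_of_isSeparated {X : Type*} [EMetricSpace X] {ε : ℝ≥0∞} (hε : 0 < ε)
    {s : Set X} (hs : IsSeparated ε s) : IsClosed s :=
  isClosed_of_spaced_out (edist_mem_uniformity hε) fun _ hx _ hy hxy hlt =>
    (hs hx hy hxy).not_gt hlt

theorem stronglyMeasurable_of_standardBorelSpace {X Y : Type*} [MeasurableSpace X]
    [StandardBorelSpace X] [TopologicalSpace Y] [TopologicalSpace.MetrizableSpace Y]
    [MeasurableSpace Y] [BorelSpace Y] {f : X → Y} (hf : Measurable f) : StronglyMeasurable f := by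
  let := TopologicalSpace.metrizableSpaceMetric Y
  refine stronglyMeasurable_iff_measurable_separable.2
    ⟨hf, isSeparable_of_forall_isSeparated_countable fun ε hε N hN hsep => ?_⟩
  exact countable_of_subset_range_of_forall_measurableSet hf hN fun s hs =>
    (isClosed_of_isSeparated (by exact_mod_cast hε) (hsep.subset hs)).measurableSet

theorem lipschitzWith_of_comp_quotientAddGroup_mk {M X : Type*} [SeminormedAddCommGroup M]
    [PseudoMetricSpace X] {S : AddSubgroup M} {K : ℝ≥0} {f : M ⧸ S → X}
    (hf : LipschitzWith K fun m : M => f m) : LipschitzWith K f := by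
  refine .of_dist_le_mul fun x y => le_of_forall_pos_le_add fun ε hε => ?_
  induction x using QuotientAddGroup.induction_on with | _ a =>
  have hδ : 0 < ε / (K + 1) := by positivity
  obtain ⟨m, hm, hmδ⟩ := QuotientAddGroup.exists_norm_mk_lt ((a : M ⧸ S) - y) hδ
  obtain rfl : ((a - m : M) : M ⧸ S) = y := by
    rw [QuotientAddGroup.mk_sub, hm, sub_sub_cancel]
  rw [← dist_eq_norm] at hmδ
  calc dist (f a) (f (a - m : M)) ≤ K * dist a (a - m) := hf.dist_le_mul a (a - m)
    _ = K * ‖m‖ := by rw [dist_self_sub_right]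
    _ ≤ K * (dist (a : M ⧸ S) (a - m : M) + ε / (K + 1)) := by gcongr
    _ ≤ K * dist (a : M ⧸ S) (a - m : M) + ε := by
      rw [mul_add, mul_div_left_comm]
      gcongr
      exact mul_le_of_le_one_right hε.le (div_le_one_of_le₀ (by linarith) (by positivity))

theorem intervalIntegrable_of_locallyIntegrable {E : Type*} [NormedAddCommGroup E] {g : ℝ → E}
    {μ : Measure ℝ} (hg : LocallyIntegrable g μ) (a b : ℝ) : IntervalIntegrable g μ a b :=
  intervalIntegrable_iff.2 ((hg.integrableOn_isCompact isCompact_uIcc).mono_set uIoc_subset_uIcc)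

section SlidingWindow

variable {E : Type*} [NormedAddCommGroup E] [NormedSpace ℝ E] {g : ℝ → E}

theorem lipschitzWith_integral_sub_add (hg : LocallyIntegrable g) {C : ℝ≥0}
    (hC : ∀ᵐ t, ‖g t‖ ≤ C) (r : ℝ) :
    LipschitzWith (2 * C) fun x => ∫ t in (x - r)..(x + r), g t := by
  have hi := intervalIntegrable_of_locallyIntegrable hg
  have hbound : ∀ a b : ℝ, ‖∫ t in a..b, g t‖ ≤ C * |b - a| := fun a b =>
    intervalIntegral.norm_integral_le_of_norm_le_const_ae (hC.mono fun t ht _ => ht)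
  refine .of_dist_le_mul fun x y => ?_
  calc dist (∫ t in (x - r)..(x + r), g t) (∫ t in (y - r)..(y + r), g t)
      = ‖(∫ t in (x - r)..(y - r), g t) - ∫ t in (x + r)..(y + r), g t‖ := by
        rw [dist_eq_norm,
          intervalIntegral.integral_interval_sub_interval_comm (hi _ _) (hi _ _) (hi _ _)]
    _ ≤ C * |y - r - (x - r)| + C * |y + r - (x + r)| :=
        norm_sub_le_of_le (hbound _ _) (hbound _ _)
    _ = 2 * C * dist x y := by
        rw [sub_sub_sub_cancel_right, add_sub_add_right_eq_sub, dist_comm, Real.dist_eq]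
        ring

theorem ae_hasDerivAt_integral_sub_add [CompleteSpace E] (hg : LocallyIntegrable g) (r : ℝ) :
    ∀ᵐ x, HasDerivAt (fun u => ∫ t in (u - r)..(u + r), g t) (g (x + r) - g (x - r)) x := by
  have hi := intervalIntegrable_of_locallyIntegrable hg
  have hderiv := _root_.LocallyIntegrable.ae_hasDerivAt_integral hg
  filter_upwards [(measurePreserving_add_right volume r).quasiMeasurePreserving.ae hderiv,
    (measurePreserving_sub_right volume r).quasiMeasurePreserving.ae hderiv] with x hadd hsub
  simpa only [Pi.sub_def, intervalIntegral.integral_interval_sub_left (hi _ _) (hi _ _)] using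
    ((hadd 0).comp_add_const x r).sub ((hsub 0).comp_sub_const x r)

end SlidingWindow

/-- The transform of `h` whose kernel is `1` on the open ball of radius `r` around `x` and `-1` off
it. On `ℝ/ℤ` with `r = 1/4` it is the function `G` attached to `h`; the quarter of the circle is
replaced by a free radius. -/
noncomputable def ballSignTransform {X E : Type*} [PseudoMetricSpace X] [MeasureSpace X]
    [NormedAddCommGroup E] [NormedSpace ℝ E] (r : ℝ) (h : X → E) (x : X) : E :=
  ∫ y, (if dist x y < r then (1 : ℝ) else -1) • h y

theorem ballSignTransform_eq {X E : Type*} [PseudoMetricSpace X] [MeasureSpace X]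
    [OpensMeasurableSpace X] [NormedAddCommGroup E] [NormedSpace ℝ E] {h : X → E}
    (hh : Integrable h) (r : ℝ) (x : X) :
    ballSignTransform r h x = (2 : ℝ) • (∫ y in ball x r, h y) - ∫ y, h y := by
  have hsign : ∀ y, (if dist x y < r then (1 : ℝ) else -1) • h y =
      ((2 : ℝ) • (ball x r).indicator h) y - h y := fun y => by
    rw [Pi.smul_apply]
    by_cases hy : y ∈ ball x r
    · rw [if_pos (mem_ball'.1 hy), indicator_of_mem hy]
      module
    · rw [if_neg (mem_ball'.not.1 hy), indicator_of_notMem hy]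
      module
  simp only [ballSignTransform, hsign]
  rw [integral_sub ((hh.indicator measurableSet_ball).smul _) hh]
  simp only [Pi.smul_apply, integral_smul, integral_indicator measurableSet_ball]

section Circle

variable {T : ℝ} [hT : Fact (0 < T)] {E : Type*} [NormedAddCommGroup E]

theorem dist_addCircle_coe_eq_abs {x t : ℝ} (hxt : |x - t| ≤ T / 2) :
    dist (x : AddCircle T) t = |x - t| := by
  rw [dist_eq_norm, ← AddCircle.coe_sub, AddCircle.norm_coe_eq_abs_iff T hT.out.ne',
    abs_of_pos hT.out]
  exact hxt

theorem addCircle_coe_preimage_ball_inter_Ioc {r : ℝ} (hr : r ≤ T / 2) (x : ℝ) :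
    ((↑) : ℝ → AddCircle T) ⁻¹' ball (x : AddCircle T) r ∩ Ioc (x - T / 2) (x - T / 2 + T) =
      Ioo (x - r) (x + r) := by
  ext t
  have hdist : t ∈ Ioc (x - T / 2) (x - T / 2 + T) → dist (x : AddCircle T) t = |x - t| :=
    fun ht => dist_addCircle_coe_eq_abs (abs_le.2 ⟨by linarith [ht.2], by linarith [ht.1]⟩)
  constructor
  · rintro ⟨hball, ht⟩
    rw [mem_preimage, mem_ball', hdist ht, abs_lt] at hball
    constructor <;> linarith
  · rintro ⟨hlt, hgt⟩
    have ht : t ∈ Ioc (x - T / 2) (x - T / 2 + T) := ⟨by linarith, by linarith⟩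
    refine ⟨?_, ht⟩
    rw [mem_preimage, mem_ball', hdist ht, abs_lt]
    constructor <;> linarith

theorem setIntegral_ball_addCircle_coe [NormedSpace ℝ E] (h : AddCircle T → E) {r : ℝ} (hr₀ : 0 ≤ r)
    (hr : r ≤ T / 2) (x : ℝ) :
    ∫ y in ball (x : AddCircle T) r, h y = ∫ t in (x - r)..(x + r), h t := by
  have hlift : ∀ t : ℝ, (ball (x : AddCircle T) r).indicator h t =
      (((↑) : ℝ → AddCircle T) ⁻¹' ball (x : AddCircle T) r).indicator (fun t : ℝ => h t) t :=
    fun _ => rfl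
  rw [← integral_indicator measurableSet_ball, ← AddCircle.integral_preimage T (x - T / 2)]
  simp only [hlift]
  rw [setIntegral_indicator (AddCircle.measurable_mk' measurableSet_ball), inter_comm,
    addCircle_coe_preimage_ball_inter_Ioc hr, intervalIntegral.integral_of_le (by linarith),
    integral_Ioc_eq_integral_Ioo]

theorem locallyIntegrable_comp_addCircle_coe {h : AddCircle T → E} (hh : Integrable h) :
    LocallyIntegrable fun t : ℝ => h t := fun x =>
  ⟨Ioc (x - T / 2) (x - T / 2 + T),
    Ioc_mem_nhds (by linarith [hT.out]) (by linarith [hT.out]),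
    (AddCircle.measurePreserving_mk T _).integrable_comp_of_integrable hh⟩

theorem ae_addCircle_coe_of_ae {p : AddCircle T → Prop} (hp : ∀ᵐ y, p y) : ∀ᵐ t : ℝ, p t := by
  rw [← Measure.restrict_univ (μ := volume), ← iUnion_Ioc_zsmul hT.out, ae_restrict_iUnion_iff]
  intro n
  rw [add_smul, one_smul]
  exact (AddCircle.measurePreserving_mk T _).quasiMeasurePreserving.ae hp

variable [NormedSpace ℝ E] {h : AddCircle T → E} {r : ℝ}

theorem ballSignTransform_addCircle_coe (hh : Integrable h) (hr₀ : 0 ≤ r) (hr : r ≤ T / 2) (x : ℝ) :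
    ballSignTransform r h (x : AddCircle T) =
      (2 : ℝ) • (∫ t in (x - r)..(x + r), h t) - ∫ y, h y := by
  rw [ballSignTransform_eq hh, setIntegral_ball_addCircle_coe h hr₀ hr]

theorem lipschitzWith_ballSignTransform (hh : Integrable h) {C : ℝ≥0} (hC : ∀ᵐ y, ‖h y‖ ≤ C)
    (hr₀ : 0 ≤ r) (hr : r ≤ T / 2) : LipschitzWith (4 * C) (ballSignTransform r h) := by
  refine lipschitzWith_of_comp_quotientAddGroup_mk (.of_dist_le_mul fun x y => ?_)
  have hwindow := (lipschitzWith_integral_sub_add (locallyIntegrable_comp_addCircle_coe hh)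
    (ae_addCircle_coe_of_ae hC) r).dist_le_mul x y
  push_cast at hwindow ⊢
  rw [ballSignTransform_addCircle_coe hh hr₀ hr, ballSignTransform_addCircle_coe hh hr₀ hr,
    dist_sub_right, dist_smul₀, Real.norm_two]
  linarith

theorem ae_hasDerivAt_ballSignTransform [CompleteSpace E] (hh : Integrable h) (hr₀ : 0 ≤ r)
    (hr : r ≤ T / 2) :
    ∀ᵐ x : ℝ, HasDerivAt (fun t : ℝ => ballSignTransform r h (t : AddCircle T))
      ((2 : ℝ) • h (x + r : ℝ) - (2 : ℝ) • h (x - r : ℝ)) x := by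
  filter_upwards [ae_hasDerivAt_integral_sub_add (locallyIntegrable_comp_addCircle_coe hh) r]
    with x hx
  simp only [ballSignTransform_addCircle_coe hh hr₀ hr, ← smul_sub]
  exact (hx.const_smul (2 : ℝ)).sub_const _

theorem antiperiodic_ballSignTransform (hh : Integrable h) :
    Function.Antiperiodic (ballSignTransform (T / 4) h) (T / 2 : ℝ) := by
  have hT₀ := hT.out
  have hi := intervalIntegrable_of_locallyIntegrable (locallyIntegrable_comp_addCircle_coe hh)
  intro x
  induction x using QuotientAddGroup.induction_on with | _ s =>
  have htotal : (∫ t in (s - T / 4)..(s + T / 4), h t) +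
      ∫ t in (s + T / 2 - T / 4)..(s + T / 2 + T / 4), h t = ∫ y, h y := by
    rw [show s + T / 2 - T / 4 = s + T / 4 by ring,
      intervalIntegral.integral_add_adjacent_intervals (hi _ _) (hi _ _),
      show s + T / 2 + T / 4 = s - T / 4 + T by ring, AddCircle.intervalIntegral_preimage]
  rw [← AddCircle.coe_add, ballSignTransform_addCircle_coe hh (by linarith) (by linarith),
    ballSignTransform_addCircle_coe hh (by linarith) (by linarith), ← htotal]
  module

end Circle

theorem bell_example2_G_properties_general {T : ℝ} [Fact (0 < T)] {E : Type*}
    [NormedAddCommGroup E] [NormedSpace ℝ E] [CompleteSpace E] {h : AddCircle T → E}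
    (hm : AEStronglyMeasurable h) {C : ℝ≥0} (hC : ∀ᵐ y, ‖h y‖ ≤ C) {G : AddCircle T → E}
    (hG : ∀ x, G x = ∫ y, (if dist x y < T / 4 then (1 : ℝ) else -1) • h y) :
    LipschitzWith (4 * C) G ∧
    (∀ᵐ x : ℝ, HasDerivAt (fun t : ℝ => G t)
      ((2 : ℝ) • h (x + T / 4 : ℝ) - (2 : ℝ) • h (x - T / 4 : ℝ)) x) ∧
    ∀ x, G (x + (T / 2 : ℝ)) = -G x := by
  obtain rfl : G = ballSignTransform (T / 4) h := funext hG
  have hT : 0 < T := Fact.out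
  have hr₀ : 0 ≤ T / 4 := by linarith
  have hr : T / 4 ≤ T / 2 := by linarith
  have hh : Integrable h := .of_bound hm C hC
  exact ⟨lipschitzWith_ballSignTransform hh hC hr₀ hr,
    ae_hasDerivAt_ballSignTransform hh hr₀ hr, antiperiodic_ballSignTransform hh⟩

/-- Let `𝕋 = ℝ/ℤ` with its Haar probability measure, `f(x,y) = 1` if `dist x y < 1/4` and
`-1` otherwise, let `h : 𝕋 → H` be measurable of unit norm a.e., and
`G(x) = ∫_𝕋 f(x,y) h(y) dy`. Then `G` is 4-Lipschitz, for a.e. `x` one has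
`G'(x) = 2 h(x + 1/4) - 2 h(x - 1/4)` (stated for the lift of `G` to `ℝ`), and
`G(x + 1/2) = -G(x)` for all `x`. -/
theorem bell_example2_G_properties (H : Type*) [NormedAddCommGroup H]
    [InnerProductSpace ℝ H] [MeasurableSpace H] [BorelSpace H] [CompleteSpace H]
    (h : UnitAddCircle → H) (hm : Measurable h)
    (h1 : ∀ᵐ y : UnitAddCircle, ‖h y‖ = 1)
    (G : UnitAddCircle → H)
    (hG : ∀ x : UnitAddCircle,
      G x = ∫ y : UnitAddCircle, (if dist x y < 1/4 then (1:ℝ) else -1) • h y) :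
    LipschitzWith 4 G ∧
    (∀ᵐ x : ℝ, HasDerivAt (fun t : ℝ => G (↑t : UnitAddCircle))
      ((2:ℝ) • h ((↑(x + 1/4) : UnitAddCircle)) - (2:ℝ) • h ((↑(x - 1/4) : UnitAddCircle))) x) ∧
    (∀ x : UnitAddCircle, G (x + (↑(1/2 : ℝ) : UnitAddCircle)) = -G x) := by
  simpa only [mul_one] using bell_example2_G_properties_general
    (stronglyMeasurable_of_standardBorelSpace hm).aestronglyMeasurable (C := 1)
    (h1.mono fun _ hy => hy.le) hG
end
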